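/- Let T be the multiplicative group of positive rational numbers, acting on the additive group ℚ by multiplication, and let G = ℚ ⋊ T be the corresponding semidirect product. Then for every proper left-invariant metric d on G, the subgroup {0} ⋊ T (the image of the canonical embedding of T into G) does not have bounded packing in G with respect to d. -/

import Mathlib

/-!
The left cosets of `{0} ⋊ T` are the sets `{a} × T` for `a : ℚ`. If `a < b` and `t = b - a`, then
`(a, t) * (1, 1) = (b, t)`, so by left invariance the cosets of `a` and `b` are at distance at most
the length of the single element `(1, 1)`. Thus the infinitely many cosets of `{0} ⋊ T` are pairwise
uniformly close.
-/

open Pointwise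

/-- A proper left-invariant metric on a group `G`, given as a distance
function `d : G → G → ℝ`. -/
structure IsProperLeftInvMetric (G : Type*) [Group G] (d : G → G → ℝ) : Prop where
  self : ∀ x, d x x = 0
  eq_of_dist_eq_zero : ∀ x y, d x y = 0 → x = y
  symm : ∀ x y, d x y = d y x
  triangle : ∀ x y z, d x z ≤ d x y + d y z
  left_invariant : ∀ g x y, d (g * x) (g * y) = d x y
  proper : ∀ r : ℝ, 0 < r → {g : G | d 1 g ≤ r}.Finite

/-- The distance between two subsets of `G`: the infimum of distances between
their points. -/
noncomputable def cosetDist {G : Type*} [Group G] (d : G → G → ℝ) (A B : Set G) : ℝ :=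
  sInf {r : ℝ | ∃ x ∈ A, ∃ y ∈ B, d x y = r}

/-- A subgroup `H` has bounded packing in `G` with respect to `d` if for every
`D > 0` there is `n` such that any collection of (pairwise distinct) left cosets
of `H`, any two of which are at distance at most `D`, has at most `n` elements. -/
def HasBoundedPacking {G : Type*} [Group G] (d : G → G → ℝ) (H : Subgroup G) : Prop :=
  ∀ D : ℝ, 0 < D → ∃ n : ℕ, ∀ S : Set (Set G),
    (∀ A ∈ S, ∃ g : G, A = g • (H : Set G)) →
    (∀ A ∈ S, ∀ B ∈ S, cosetDist d A B ≤ D) →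
    ∀ T : Finset (Set G), ↑T ⊆ S → T.card ≤ n

/-- The multiplicative group of positive rationals. -/
abbrev PosRat : Type := { q : ℚ // 0 < q }

/-- Multiplication by a positive rational, as an automorphism of the additive
group `ℚ` (written multiplicatively). -/
def mulAutOfPos (t : PosRat) : Multiplicative ℚ ≃* Multiplicative ℚ where
  toFun a := Multiplicative.ofAdd (t.1 * a.toAdd)
  invFun a := Multiplicative.ofAdd (t.1⁻¹ * a.toAdd)
  left_inv a := by
    simp [inv_mul_cancel_left₀ (ne_of_gt t.2)]
  right_inv a := by
    simp [mul_inv_cancel_left₀ (ne_of_gt t.2)]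
  map_mul' a b := by
    simp [mul_add]

/-- The action of the positive rationals on `ℚ` by multiplication, as a
homomorphism to the automorphism group. -/
def posRatAction : PosRat →* MulAut (Multiplicative ℚ) where
  toFun := mulAutOfPos
  map_one' := by
    ext a
    simp [mulAutOfPos]
  map_mul' s t := by
    ext a
    simp [mulAutOfPos, mul_assoc]

/-- The semidirect product `ℚ ⋊ T` where `T` is the group of positive rationals
acting on `(ℚ, +)` by multiplication. -/
abbrev RatSemidirect : Type := Multiplicative ℚ ⋊[posRatAction] PosRat

/-- The left coset of `{0} ⋊ T` represented by `(a, 1)`. -/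
def ratCoset (a : ℚ) : Set RatSemidirect :=
  (SemidirectProduct.inl (Multiplicative.ofAdd a) : RatSemidirect) •
    ((SemidirectProduct.inr (φ := posRatAction)).range : Set RatSemidirect)

theorem mem_ratCoset (a : ℚ) (x : RatSemidirect) :
    x ∈ ratCoset a ↔ x.left = Multiplicative.ofAdd a := by
  unfold ratCoset
  constructor
  · rintro ⟨_, ⟨t, rfl⟩, rfl⟩
    simp
  · intro h
    refine ⟨SemidirectProduct.inr x.right, ⟨x.right, rfl⟩, ?_⟩
    rw [← h]
    exact SemidirectProduct.inl_left_mul_inr_right x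

theorem ratCoset_injective : Function.Injective ratCoset := by
  intro a b h
  have hx : (SemidirectProduct.inl (Multiplicative.ofAdd a) : RatSemidirect) ∈ ratCoset b := by
    rw [← h, mem_ratCoset, SemidirectProduct.left_inl]
  rw [mem_ratCoset, SemidirectProduct.left_inl] at hx
  exact Multiplicative.ofAdd.injective hx

theorem IsProperLeftInvMetric.nonneg {G : Type*} [Group G] {d : G → G → ℝ}
    (hd : IsProperLeftInvMetric G d) (x y : G) : 0 ≤ d x y := by
  have h := hd.triangle x y x
  rw [hd.self, hd.symm y x] at h
  linarith

theorem IsProperLeftInvMetric.cosetDist_le {G : Type*} [Group G] {d : G → G → ℝ}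
    (hd : IsProperLeftInvMetric G d) {A B : Set G} {x y : G} (hx : x ∈ A) (hy : y ∈ B) :
    cosetDist d A B ≤ d x y :=
  csInf_le ⟨0, by rintro _ ⟨x, -, y, -, rfl⟩; exact hd.nonneg x y⟩ ⟨x, hx, y, hy, rfl⟩

/-- Distinct cosets contain points that differ by right multiplication by `(1, 1)`. -/
theorem exists_mem_ratCoset_mul {a b : ℚ} (h : a < b) :
    ∃ x ∈ ratCoset a,
      x * SemidirectProduct.inl (Multiplicative.ofAdd (1 : ℚ)) ∈ ratCoset b := by
  refine ⟨⟨Multiplicative.ofAdd a, ⟨b - a, sub_pos.2 h⟩⟩, (mem_ratCoset _ _).2 rfl, ?_⟩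
  rw [mem_ratCoset, SemidirectProduct.mul_left, SemidirectProduct.left_inl]
  change Multiplicative.ofAdd (a + (b - a) * 1) = Multiplicative.ofAdd b
  congr 1
  ring

theorem cosetDist_ratCoset_le {d : RatSemidirect → RatSemidirect → ℝ}
    (hd : IsProperLeftInvMetric RatSemidirect d) (a b : ℚ) :
    cosetDist d (ratCoset a) (ratCoset b) ≤
      d 1 (SemidirectProduct.inl (Multiplicative.ofAdd (1 : ℚ))) := by
  have key (x u : RatSemidirect) : d x (x * u) = d 1 u := by
    simpa using hd.left_invariant x 1 u
  rcases lt_trichotomy a b with h | rfl | h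
  · obtain ⟨x, hx, hy⟩ := exists_mem_ratCoset_mul h
    exact (hd.cosetDist_le hx hy).trans_eq (key _ _)
  · have hx : (SemidirectProduct.inl (Multiplicative.ofAdd a) : RatSemidirect) ∈ ratCoset a := by
      rw [mem_ratCoset, SemidirectProduct.left_inl]
    exact (hd.cosetDist_le hx hx).trans ((hd.self _).trans_le (hd.nonneg _ _))
  · obtain ⟨x, hx, hy⟩ := exists_mem_ratCoset_mul h
    exact (hd.cosetDist_le hy hx).trans_eq ((hd.symm _ _).trans (key _ _))

/-- The subgroup `{0} ⋊ T` (the canonical copy of `T = ℚ_{>0}`) does not have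
bounded packing in `ℚ ⋊ T`. -/
theorem posRat_not_hasBoundedPacking_in_ratSemidirect
    (d : RatSemidirect → RatSemidirect → ℝ)
    (hd : IsProperLeftInvMetric RatSemidirect d) :
    ¬ HasBoundedPacking d (SemidirectProduct.inr (φ := posRatAction)).range := by
  intro H
  -- Adding `1` makes the bound visibly positive.
  obtain ⟨n, hn⟩ := H (d 1 (SemidirectProduct.inl (Multiplicative.ofAdd (1 : ℚ))) + 1)
    (by linarith [hd.nonneg 1 (SemidirectProduct.inl (Multiplicative.ofAdd (1 : ℚ)))])
  obtain ⟨T, hT, hcard⟩ :=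
    (Set.infinite_range_of_injective ratCoset_injective).exists_subset_card_eq (n + 1)
  have h := hn (Set.range ratCoset)
    (by rintro _ ⟨a, rfl⟩; exact ⟨_, rfl⟩)
    (by
      rintro _ ⟨a, rfl⟩ _ ⟨b, rfl⟩
      linarith [cosetDist_ratCoset_le hd a b])
    T hT
  omega
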